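/- Define the 57 vectors in ℝ^3: 1=(0,0,1), 2=(1,-1,0), 3=(1,1,0), 4=(0,1,0), 5=(1,0,-1), 6=(1,0,1), 7=(1,0,0), 8=(0,1,1), 9=(0,1,-1), A=(√2,-1,0), B=(1,√2,0), C=(√2,1,0), D=(1,-√2,0), E=(√2,0,-1), F=(1,0,√2), G=(√2,0,1), H=(1,0,-√2), I=(0,√2,1), J=(0,1,-√2), K=(0,√2,-1), L=(0,1,√2), M=(√2,1,-1), N=(√2,-1,1), O=(-√2,1,1), P=(√2,1,1), Q=(1,√2,1), R=(1,-√2,1), S=(-1,√2,1), T=(1,√2,-1), U=(1,1,√2), V=(1,1,-√2), W=(-1,1,√2), X=(1,-1,√2), Y=(-1,-√2,3), Z=(1,√2,3), a=(-√2,1,3), b=(√2,-1,3), c=(-1,√2,3), d=(1,-√2,3), e=(√2,1,3), f=(-√2,-1,3), g=(-1,3,-√2), h=(3,-1,-√2), i=(-1,3,√2), j=(3,-1,√2), k=(1,3,-√2), l=(3,1,√2), m=(1,3,√2), n=(3,1,-√2), o=(-√2,3,1), p=(√2,3,-1), q=(√2,3,1), r=(-√2,3,-1), s=(3,-√2,-1),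 t=(3,√2,-1), u=(3,√2,1), v=(3,-√2,1). There is no function f from these 57 vectors to {0,1} such that (i) no two of the vectors that are orthogonal (with respect to the standard inner product on ℝ^3) are both assigned 1, and (ii) each of the 40 triples 123, 147, 456, 5QR, 6ST, 789, 8MN, 9OP, ATZ, 1AB, BNa, BOb, 1CD, CRc, CSd, DMe, DPf, 4EF, FMo, FOp, 4GH, HNq, HPr, 7IJ, JSu, 7KL, LRt, LTv, AQY, JQs, EUg, KUh, 2UV, GVi, IVj, GWk, KWl, 3WX, EXm, IXn contains at least one vector assigned 1. That is, the Peres 57-vector set is a Kochen-Specker set in ℝ^3. -/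

import Mathlib

def dot3 (u v : Fin 3 → ℝ) : ℝ := ∑ i, u i * v i

noncomputable def v1 : Fin 3 → ℝ := ![0, 0, 1]
noncomputable def v2 : Fin 3 → ℝ := ![1, (-1), 0]
noncomputable def v3 : Fin 3 → ℝ := ![1, 1, 0]
noncomputable def v4 : Fin 3 → ℝ := ![0, 1, 0]
noncomputable def v5 : Fin 3 → ℝ := ![1, 0, (-1)]
noncomputable def v6 : Fin 3 → ℝ := ![1, 0, 1]
noncomputable def v7 : Fin 3 → ℝ := ![1, 0, 0]
noncomputable def v8 : Fin 3 → ℝ := ![0, 1, 1]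
noncomputable def v9 : Fin 3 → ℝ := ![0, 1, (-1)]
noncomputable def vA : Fin 3 → ℝ := ![Real.sqrt 2, (-1), 0]
noncomputable def vB : Fin 3 → ℝ := ![1, Real.sqrt 2, 0]
noncomputable def vC : Fin 3 → ℝ := ![Real.sqrt 2, 1, 0]
noncomputable def vD : Fin 3 → ℝ := ![1, (-Real.sqrt 2), 0]
noncomputable def vE : Fin 3 → ℝ := ![Real.sqrt 2, 0, (-1)]
noncomputable def vF : Fin 3 → ℝ := ![1, 0, Real.sqrt 2]
noncomputable def vG : Fin 3 → ℝ := ![Real.sqrt 2, 0, 1]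
noncomputable def vH : Fin 3 → ℝ := ![1, 0, (-Real.sqrt 2)]
noncomputable def vI : Fin 3 → ℝ := ![0, Real.sqrt 2, 1]
noncomputable def vJ : Fin 3 → ℝ := ![0, 1, (-Real.sqrt 2)]
noncomputable def vK : Fin 3 → ℝ := ![0, Real.sqrt 2, (-1)]
noncomputable def vL : Fin 3 → ℝ := ![0, 1, Real.sqrt 2]
noncomputable def vM : Fin 3 → ℝ := ![Real.sqrt 2, 1, (-1)]
noncomputable def vN : Fin 3 → ℝ := ![Real.sqrt 2, (-1), 1]
noncomputable def vO : Fin 3 → ℝ := ![(-Real.sqrt 2), 1, 1]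
noncomputable def vP : Fin 3 → ℝ := ![Real.sqrt 2, 1, 1]
noncomputable def vQ : Fin 3 → ℝ := ![1, Real.sqrt 2, 1]
noncomputable def vR : Fin 3 → ℝ := ![1, (-Real.sqrt 2), 1]
noncomputable def vS : Fin 3 → ℝ := ![(-1), Real.sqrt 2, 1]
noncomputable def vT : Fin 3 → ℝ := ![1, Real.sqrt 2, (-1)]
noncomputable def vU : Fin 3 → ℝ := ![1, 1, Real.sqrt 2]
noncomputable def vV : Fin 3 → ℝ := ![1, 1, (-Real.sqrt 2)]
noncomputable def vW : Fin 3 → ℝ := ![(-1), 1, Real.sqrt 2]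
noncomputable def vX : Fin 3 → ℝ := ![1, (-1), Real.sqrt 2]
noncomputable def vY : Fin 3 → ℝ := ![(-1), (-Real.sqrt 2), 3]
noncomputable def vZ : Fin 3 → ℝ := ![1, Real.sqrt 2, 3]
noncomputable def va : Fin 3 → ℝ := ![(-Real.sqrt 2), 1, 3]
noncomputable def vb : Fin 3 → ℝ := ![Real.sqrt 2, (-1), 3]
noncomputable def vc : Fin 3 → ℝ := ![(-1), Real.sqrt 2, 3]
noncomputable def vd : Fin 3 → ℝ := ![1, (-Real.sqrt 2), 3]
noncomputable def ve : Fin 3 → ℝ := ![Real.sqrt 2, 1, 3]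
noncomputable def vf : Fin 3 → ℝ := ![(-Real.sqrt 2), (-1), 3]
noncomputable def vg : Fin 3 → ℝ := ![(-1), 3, (-Real.sqrt 2)]
noncomputable def vh : Fin 3 → ℝ := ![3, (-1), (-Real.sqrt 2)]
noncomputable def vi : Fin 3 → ℝ := ![(-1), 3, Real.sqrt 2]
noncomputable def vj : Fin 3 → ℝ := ![3, (-1), Real.sqrt 2]
noncomputable def vk : Fin 3 → ℝ := ![1, 3, (-Real.sqrt 2)]
noncomputable def vl : Fin 3 → ℝ := ![3, 1, Real.sqrt 2]
noncomputable def vm : Fin 3 → ℝ := ![1, 3, Real.sqrt 2]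
noncomputable def vn : Fin 3 → ℝ := ![3, 1, (-Real.sqrt 2)]
noncomputable def vo : Fin 3 → ℝ := ![(-Real.sqrt 2), 3, 1]
noncomputable def vp : Fin 3 → ℝ := ![Real.sqrt 2, 3, (-1)]
noncomputable def vq : Fin 3 → ℝ := ![Real.sqrt 2, 3, 1]
noncomputable def vr : Fin 3 → ℝ := ![(-Real.sqrt 2), 3, (-1)]
noncomputable def vs : Fin 3 → ℝ := ![3, (-Real.sqrt 2), (-1)]
noncomputable def vt : Fin 3 → ℝ := ![3, Real.sqrt 2, (-1)]
noncomputable def vu : Fin 3 → ℝ := ![3, Real.sqrt 2, 1]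
noncomputable def vv : Fin 3 → ℝ := ![3, (-Real.sqrt 2), 1]

noncomputable def allVecs : List (Fin 3 → ℝ) :=
  [v1, v2, v3, v4, v5, v6, v7, v8, v9, vA, vB, vC, vD, vE, vF, vG, vH, vI, vJ, vK, vL, vM, vN, vO, vP, vQ, vR, vS, vT, vU, vV, vW, vX, vY, vZ, va, vb, vc, vd, ve, vf, vg, vh, vi, vj, vk, vl, vm, vn, vo, vp, vq, vr, vs, vt, vu, vv]

noncomputable def tuples : List (List (Fin 3 → ℝ)) :=
  [[v1, v2, v3],
   [v1, v4, v7],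
   [v4, v5, v6],
   [v5, vQ, vR],
   [v6, vS, vT],
   [v7, v8, v9],
   [v8, vM, vN],
   [v9, vO, vP],
   [vA, vT, vZ],
   [v1, vA, vB],
   [vB, vN, va],
   [vB, vO, vb],
   [v1, vC, vD],
   [vC, vR, vc],
   [vC, vS, vd],
   [vD, vM, ve],
   [vD, vP, vf],
   [v4, vE, vF],
   [vF, vM, vo],
   [vF, vO, vp],
   [v4, vG, vH],
   [vH, vN, vq],
   [vH, vP, vr],
   [v7, vI, vJ],
   [vJ, vS, vu],
   [v7, vK, vL],
   [vL, vR, vt],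
   [vL, vT, vv],
   [vA, vQ, vY],
   [vJ, vQ, vs],
   [vE, vU, vg],
   [vK, vU, vh],
   [v2, vU, vV],
   [vG, vV, vi],
   [vI, vV, vj],
   [vG, vW, vk],
   [vK, vW, vl],
   [v3, vW, vX],
   [vE, vX, vm],
   [vI, vX, vn]]

/-!
Of the 57 vectors, 24 occur in a single triple and only serve to complete an orthogonal pair to a
basis, so a contradiction already arises on Peres' 33 rays and the 16 bases they contain. These are
invariant under permutations and sign changes of the coordinates `x, y, z`. By this symmetry one may
assume that `z`, `x + z`, `y + z` and `x - y + √2 z` all have the value `1`, since each of them can be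
exchanged with the alternatives left open by its basis. From then on every value is forced: two
vectors of a basis are orthogonal to vectors of value `1`, so the third one has value `1`, until all
three vectors of a basis have value `0`.

The rays have coordinates in `ℤ[√2]`, where orthogonality and symmetry are decidable.
-/

open Matrix

theorem mem_preimage_of_apply_eq {α β : Type*} {g : α → β} {s : Set β} {x : α} {y : β}
    (hxy : g x = y) (hy : y ∈ s) : x ∈ g ⁻¹' s := by
  rwa [Set.mem_preimage, hxy]

section RayColoring

variable {ι R : Type*} [Fintype ι] [CommRing R]

/-- `F` is the set of vectors assigned the value `1` by a Kochen–Specker assignment on rays for the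
bases `B`. A ray is encoded by the vectors `v` and `-v` together, whence the closure under `-`. -/
structure IsRayColoring (B : List (List (ι → R))) (F : Set (ι → R)) : Prop where
  neg_mem {v} : v ∈ F → -v ∈ F
  notMem {u v} : u ∈ F → u ⬝ᵥ v = 0 → v ∉ F
  exists_mem {t} : t ∈ B → ∃ v ∈ t, v ∈ F

/-- `g` preserves the dot product and maps each of the bases `B` onto another one, where bases are
compared up to the signs and the order of their vectors. Only the inclusion `t' ⊆ ± g(t)` is
required: it is what makes colorings pull back along `g`. -/
structure IsRaySymmetry (B : List (List (ι → R))) (g : (ι → R) →ₗ[R] (ι → R)) : Prop where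
  dotProduct_map (u v) : g u ⬝ᵥ g v = u ⬝ᵥ v
  exists_basis {t} : t ∈ B → ∃ t' ∈ B, ∀ w ∈ t', ∃ v ∈ t, g v = w ∨ g v = -w

namespace IsRayColoring

variable {B : List (List (ι → R))} {F : Set (ι → R)}

theorem preimage (hF : IsRayColoring B F) {g : (ι → R) →ₗ[R] (ι → R)} (hg : IsRaySymmetry B g) :
    IsRayColoring B (g ⁻¹' F) where
  neg_mem hv := by simpa using hF.neg_mem hv
  notMem hu huv := hF.notMem hu ((hg.dotProduct_map _ _).trans huv)
  exists_mem ht := by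
    obtain ⟨t', ht', h⟩ := hg.exists_basis ht
    obtain ⟨w, hw, hwF⟩ := hF.exists_mem ht'
    obtain ⟨v, hv, hvw | hvw⟩ := h w hw
    · exact ⟨v, hv, by simpa [hvw]⟩
    · exact ⟨v, hv, by simpa [hvw] using hF.neg_mem hwF⟩

theorem mem_or_mem_of_notMem (hF : IsRayColoring B F) {a b c : ι → R}
    (hB : ∃ t ∈ B, t ⊆ [a, b, c]) (ha : a ∉ F) : b ∈ F ∨ c ∈ F := by
  obtain ⟨t, ht, hsub⟩ := hB
  obtain ⟨v, hv, hvF⟩ := hF.exists_mem ht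
  have hmem : v = a ∨ v = b ∨ v = c := by simpa using hsub hv
  rcases hmem with rfl | rfl | rfl
  exacts [absurd hvF ha, .inl hvF, .inr hvF]

theorem mem_of_orthogonal_of_orthogonal (hF : IsRayColoring B F) {a b c u v : ι → R}
    (hB : ∃ t ∈ B, t ⊆ [a, b, c]) (hu : u ∈ F) (hua : u ⬝ᵥ a = 0) (hv : v ∈ F)
    (hvb : v ⬝ᵥ b = 0) : c ∈ F :=
  (hF.mem_or_mem_of_notMem hB (hF.notMem hu hua)).resolve_left (hF.notMem hv hvb)

theorem of_assignment {f : (ι → R) → Bool}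
    (hB : ∀ v ∈ B.flatten, v ⬝ᵥ v ≠ 0)
    (horth : ∀ u ∈ B.flatten, ∀ v ∈ B.flatten, u ≠ v → u ⬝ᵥ v = 0 → ¬(f u = true ∧ f v = true))
    (hbasis : ∀ t ∈ B, ∃ v ∈ t, f v = true) :
    IsRayColoring B {v | ∃ w ∈ B.flatten, f w = true ∧ (v = w ∨ v = -w)} where
  neg_mem := by
    rintro v ⟨w, hw, hfw, rfl | rfl⟩
    · exact ⟨v, hw, hfw, .inr rfl⟩
    · exact ⟨w, hw, hfw, .inl (neg_neg w)⟩
  notMem := by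
    rintro u v ⟨u', hu', hfu, hu⟩ huv ⟨v', hv', hfv, hv⟩
    have huv' : u' ⬝ᵥ v' = 0 := by
      rcases hu with rfl | rfl <;> rcases hv with rfl | rfl <;> simpa using huv
    have hne : u' ≠ v' := by
      rintro rfl
      exact hB u' hu' huv'
    exact horth u' hu' v' hv' hne huv' ⟨hfu, hfv⟩
  exists_mem {t} ht := by
    obtain ⟨v, hv, hfv⟩ := hbasis t ht
    exact ⟨v, hv, v, List.mem_flatten_of_mem ht hv, hfv, .inl rfl⟩

end IsRayColoring

/-- The reflection that changes the sign of the `i`-th coordinate. -/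
def negCoord [DecidableEq ι] (i : ι) : (ι → R) →ₗ[R] (ι → R) :=
  LinearMap.mulLeft R (Function.update 1 i (-1))

theorem negCoord_dotProduct_negCoord [DecidableEq ι] (i : ι) (u v : ι → R) :
    negCoord i u ⬝ᵥ negCoord i v = u ⬝ᵥ v := by
  refine Finset.sum_congr rfl fun j _ ↦ ?_
  obtain rfl | hj := eq_or_ne j i <;> simp [negCoord, *]

end RayColoring

local notation "√₂" => (Zsqrtd.sqrtd : ℤ√2)

/-- The 16 orthogonal bases contained in Peres' 33 rays, which form a single configuration invariant
under the symmetries of the cube. -/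
def peresBases : List (List (Fin 3 → ℤ√2)) :=
  [[![0, 0, 1], ![1, -1, 0], ![1, 1, 0]],
   [![0, 0, 1], ![0, 1, 0], ![1, 0, 0]],
   [![0, 1, 0], ![1, 0, -1], ![1, 0, 1]],
   [![1, 0, -1], ![1, √₂, 1], ![1, -√₂, 1]],
   [![1, 0, 1], ![-1, √₂, 1], ![1, √₂, -1]],
   [![1, 0, 0], ![0, 1, 1], ![0, 1, -1]],
   [![0, 1, 1], ![√₂, 1, -1], ![√₂, -1, 1]],
   [![0, 1, -1], ![-√₂, 1, 1], ![√₂, 1, 1]],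
   [![0, 0, 1], ![√₂, -1, 0], ![1, √₂, 0]],
   [![0, 0, 1], ![√₂, 1, 0], ![1, -√₂, 0]],
   [![0, 1, 0], ![√₂, 0, -1], ![1, 0, √₂]],
   [![0, 1, 0], ![√₂, 0, 1], ![1, 0, -√₂]],
   [![1, 0, 0], ![0, √₂, 1], ![0, 1, -√₂]],
   [![1, 0, 0], ![0, √₂, -1], ![0, 1, √₂]],
   [![1, -1, 0], ![1, 1, √₂], ![1, 1, -√₂]],
   [![1, 1, 0], ![-1, 1, √₂], ![1, -1, √₂]]]

theorem dotProduct_self_ne_zero_of_mem_peresBases :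
    ∀ v ∈ peresBases.flatten, v ⬝ᵥ v ≠ 0 := by
  decide

theorem isRaySymmetry_peresBases_swap (i j : Fin 3) :
    IsRaySymmetry peresBases (LinearMap.funLeft (ℤ√2) (ℤ√2) (Equiv.swap i j)) where
  dotProduct_map u v := comp_equiv_dotProduct_comp_equiv u v (Equiv.swap i j)
  exists_basis {t} := by
    revert i j t
    decide

theorem isRaySymmetry_peresBases_negCoord (i : Fin 3) :
    IsRaySymmetry peresBases (negCoord i) where
  dotProduct_map := negCoord_dotProduct_negCoord i
  exists_basis {t} := by
    revert i t
    decide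

namespace IsRayColoring

variable {F : Set (Fin 3 → ℤ√2)}

theorem notMem_one_neg_one_sqrt (hF : IsRayColoring peresBases F) (hz : ![0, 0, 1] ∈ F)
    (hxz : ![1, 0, 1] ∈ F) (hyz : ![0, 1, 1] ∈ F) : ![1, -1, √₂] ∉ F := by
  intro h
  have hvF : ![1, 0, √₂] ∈ F :=
    hF.mem_of_orthogonal_of_orthogonal (a := ![0, 1, 0]) (b := ![√₂, 0, -1])
      (by decide) hz (by decide) h (by decide)
  have hvJ : ![0, 1, -√₂] ∈ F :=
    hF.mem_of_orthogonal_of_orthogonal (a := ![1, 0, 0]) (b := ![0, √₂, 1])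
      (by decide) hz (by decide) h (by decide)
  have hvP : ![√₂, 1, 1] ∈ F :=
    hF.mem_of_orthogonal_of_orthogonal (a := ![0, 1, -1]) (b := ![-√₂, 1, 1])
      (by decide) hyz (by decide) hvF (by decide)
  have hvG : ![√₂, 0, 1] ∈ F :=
    hF.mem_of_orthogonal_of_orthogonal (a := ![0, 1, 0]) (b := ![1, 0, -√₂])
      (by decide) hz (by decide) hvP (by decide)
  have hvU : ![1, 1, √₂] ∈ F :=
    hF.mem_of_orthogonal_of_orthogonal (a := ![1, -1, 0]) (b := ![1, 1, -√₂])
      (by decide) hz (by decide) hvG (by decide)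
  have hvL : ![0, 1, √₂] ∈ F :=
    hF.mem_of_orthogonal_of_orthogonal (a := ![1, 0, 0]) (b := ![0, √₂, -1])
      (by decide) hz (by decide) hvU (by decide)
  have hvR : ![1, -√₂, 1] ∈ F :=
    hF.mem_of_orthogonal_of_orthogonal (a := ![1, 0, -1]) (b := ![1, √₂, 1])
      (by decide) hxz (by decide) hvJ (by decide)
  exact hF.notMem hvL (by decide) hvR

theorem notMem_zero_one_one (hF : IsRayColoring peresBases F) (hz : ![0, 0, 1] ∈ F)
    (hxz : ![1, 0, 1] ∈ F) : ![0, 1, 1] ∉ F := by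
  intro hyz
  have hxy : ![1, 1, 0] ∉ F := hF.notMem hz (by decide)
  have hor : ![-1, 1, √₂] ∈ F ∨ ![1, -1, √₂] ∈ F := hF.mem_or_mem_of_notMem (by decide) hxy
  rcases hor with h | h
  · exact (hF.preimage (isRaySymmetry_peresBases_swap 0 1)).notMem_one_neg_one_sqrt
      (mem_preimage_of_apply_eq (by decide) hz) (mem_preimage_of_apply_eq (by decide) hyz)
      (mem_preimage_of_apply_eq (by decide) hxz) (mem_preimage_of_apply_eq (by decide) h)
  · exact hF.notMem_one_neg_one_sqrt hz hxz hyz h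

theorem notMem_one_zero_one (hF : IsRayColoring peresBases F) (hz : ![0, 0, 1] ∈ F) :
    ![1, 0, 1] ∉ F := by
  intro hxz
  have hx : ![1, 0, 0] ∉ F := hF.notMem hz (by decide)
  have hor : ![0, 1, 1] ∈ F ∨ ![0, 1, -1] ∈ F := hF.mem_or_mem_of_notMem (by decide) hx
  rcases hor with h | h
  · exact hF.notMem_zero_one_one hz hxz h
  · exact (hF.preimage (isRaySymmetry_peresBases_negCoord 1)).notMem_zero_one_one
      (mem_preimage_of_apply_eq (by decide) hz) (mem_preimage_of_apply_eq (by decide) hxz)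
      (mem_preimage_of_apply_eq (by decide) (hF.neg_mem h))

theorem notMem_zero_zero_one (hF : IsRayColoring peresBases F) : ![0, 0, 1] ∉ F := by
  intro hz
  have hy : ![0, 1, 0] ∉ F := hF.notMem hz (by decide)
  have hor : ![1, 0, -1] ∈ F ∨ ![1, 0, 1] ∈ F := hF.mem_or_mem_of_notMem (by decide) hy
  rcases hor with h | h
  · exact (hF.preimage (isRaySymmetry_peresBases_negCoord 0)).notMem_one_zero_one
      (mem_preimage_of_apply_eq (by decide) hz)
      (mem_preimage_of_apply_eq (by decide) (hF.neg_mem h))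
  · exact hF.notMem_one_zero_one hz h

end IsRayColoring

theorem not_isRayColoring_peresBases (F : Set (Fin 3 → ℤ√2)) : ¬IsRayColoring peresBases F := by
  intro hF
  have hor : ![0, 1, 0] ∈ F ∨ ![1, 0, 0] ∈ F :=
    hF.mem_or_mem_of_notMem (by decide) hF.notMem_zero_zero_one
  rcases hor with h | h
  · exact (hF.preimage (isRaySymmetry_peresBases_swap 1 2)).notMem_zero_zero_one
      (mem_preimage_of_apply_eq (by decide) h)
  · exact (hF.preimage (isRaySymmetry_peresBases_swap 0 2)).notMem_zero_zero_one
      (mem_preimage_of_apply_eq (by decide) h)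

theorem peres57_vector_KS_general :
    ¬ ∃ f : (Fin 3 → ℤ√2) → Bool,
      (∀ u ∈ peresBases.flatten, ∀ v ∈ peresBases.flatten, u ≠ v → u ⬝ᵥ v = 0 →
        ¬ (f u = true ∧ f v = true)) ∧
      (∀ t ∈ peresBases, ∃ v ∈ t, f v = true) := by
  rintro ⟨f, horth, hbasis⟩
  exact not_isRayColoring_peresBases _
    (.of_assignment dotProduct_self_ne_zero_of_mem_peresBases horth hbasis)

/-- The vector of `ℝ³` represented by a vector over `ℤ[√2]`. -/
noncomputable def toRealVec (v : Fin 3 → ℤ√2) : Fin 3 → ℝ :=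
  Zsqrtd.toReal zero_le_two ∘ v

theorem toRealVec_injective : Function.Injective toRealVec :=
  (Zsqrtd.toReal_injective zero_le_two fun n h ↦ by
    have : n < 2 := by nlinarith
    have : -2 < n := by nlinarith
    interval_cases n <;> omega).comp_left

theorem dot3_toRealVec (u v : Fin 3 → ℤ√2) :
    dot3 (toRealVec u) (toRealVec v) = Zsqrtd.toReal zero_le_two (u ⬝ᵥ v) :=
  (RingHom.map_dotProduct _ u v).symm

theorem toRealVec_vec3 (a b c : ℤ√2) : toRealVec ![a, b, c] =
    ![Zsqrtd.toReal zero_le_two a, Zsqrtd.toReal zero_le_two b, Zsqrtd.toReal zero_le_two c] := by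
  ext i
  fin_cases i <;> rfl

theorem map_toRealVec_mem_tuples : ∀ t ∈ peresBases, t.map toRealVec ∈ tuples := by
  simp [peresBases, tuples, toRealVec_vec3, v1, v2, v3, v4, v5, v6, v7, v8, v9, vA, vB, vC, vD, vE,
    vF, vG, vH, vI, vJ, vK, vL, vM, vN, vO, vP, vQ, vR, vS, vT, vU, vV, vW, vX]

theorem mem_allVecs_of_mem_tuples : ∀ t ∈ tuples, ∀ v ∈ t, v ∈ allVecs := by
  simp [tuples, allVecs]

theorem toRealVec_mem_allVecs {v : Fin 3 → ℤ√2} (hv : v ∈ peresBases.flatten) :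
    toRealVec v ∈ allVecs := by
  obtain ⟨t, ht, hvt⟩ := List.mem_flatten.1 hv
  exact mem_allVecs_of_mem_tuples _ (map_toRealVec_mem_tuples t ht) _ (List.mem_map_of_mem hvt)

theorem peres57_vector_KS :
    ¬ ∃ f : (Fin 3 → ℝ) → Bool,
      (∀ u ∈ allVecs, ∀ v ∈ allVecs, u ≠ v → dot3 u v = 0 →
        ¬ (f u = true ∧ f v = true)) ∧
      (∀ t ∈ tuples, ∃ v ∈ t, f v = true) := by
  rintro ⟨f, horth, hbasis⟩
  refine peres57_vector_KS_general ⟨f ∘ toRealVec, fun u hu v hv hne huv ↦ ?_, fun t ht ↦ ?_⟩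
  · exact horth _ (toRealVec_mem_allVecs hu) _ (toRealVec_mem_allVecs hv)
      (toRealVec_injective.ne hne) (by rw [dot3_toRealVec, huv, map_zero])
  · simpa using hbasis _ (map_toRealVec_mem_tuples t ht)
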